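/- arXiv:1309.4882 — 3 statements merged into one kernel-verified Lean document; each statement's English description precedes it below -/
import Mathlib

section
/- (Markov's theorem) Let p be a real polynomial of degree at most d such that |p(x)| ≤ 1 for all x ∈ [-1,1]. Then the derivative p' of p satisfies |p'(x)| ≤ d² for all x ∈ [-1,1]. -/
namespace MarkovAux

open Polynomial Polynomial.Chebyshev Real

/-- Riesz nodes. -/
noncomputable def tt (n k : ℕ) : ℝ := (2 * k + 1) * π / (2 * n)

/-- Riesz weights. -/
noncomputable def aa (n k : ℕ) : ℝ := sin (n * tt n k) / (2 * n * (1 - cos (tt n k)))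

/-- Riesz sine sums. -/
noncomputable def SS (n : ℕ) (x : ℝ) : ℝ := ∑ k ∈ Finset.range (2 * n), aa n k * sin (x * tt n k)

lemma cos_n_tt {n : ℕ} (hn : 0 < n) (k : ℕ) : cos (n * tt n k) = 0 := by
  rw [Real.cos_eq_zero_iff]
  refine ⟨k, ?_⟩
  have : (n : ℝ) ≠ 0 := by positivity
  unfold tt
  push_cast
  field_simp

lemma sin_n_tt_sq {n : ℕ} (hn : 0 < n) (k : ℕ) : sin (n * tt n k) ^ 2 = 1 := by
  have := sin_sq_add_cos_sq (n * tt n k)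
  rw [cos_n_tt hn] at this
  linarith

lemma cos_tt_lt {n k : ℕ} (hk : k < 2 * n) : 0 < 1 - cos (tt n k) := by
  have hn : 0 < (n : ℝ) := by
    have : 0 < n := by omega
    exact_mod_cast this
  have h0 : 0 < tt n k := by unfold tt; positivity
  have h1 : tt n k < 2 * π := by
    unfold tt
    rw [div_lt_iff₀ (by positivity)]
    have : (k : ℝ) + 1 ≤ 2 * n := by exact_mod_cast hk
    nlinarith [pi_pos]
  have h2 : cos (tt n k) ≠ 1 := by
    intro h
    rw [Real.cos_eq_one_iff_of_lt_of_lt (by linarith) h1] at h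
    linarith
  have := lt_of_le_of_ne (cos_le_one _) h2
  linarith

lemma sum_cos {n m : ℕ} (hm : 0 < m) (hmn : m < 2 * n) :
    ∑ k ∈ Finset.range (2 * n), cos (m * tt n k) = 0 := by
  have hn : 0 < (n : ℝ) := by
    have : 0 < n := by omega
    exact_mod_cast this
  set a : ℝ := m * π / (2 * n) with ha
  have hm' : 0 < (m : ℝ) := by exact_mod_cast hm
  have ha0 : 0 < a := by positivity
  have ha1 : a < π := by
    rw [ha, div_lt_iff₀ (by positivity)]
    have : (m : ℝ) < 2 * n := by exact_mod_cast hmn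
    nlinarith [pi_pos]
  have hs : 0 < sin a := sin_pos_of_pos_of_lt_pi ha0 ha1
  have key : ∀ k : ℕ, 2 * sin a * cos (m * tt n k) =
      sin (2 * ((k + 1 : ℕ) : ℝ) * a) - sin (2 * (k : ℝ) * a) := by
    intro k
    have e1 : 2 * ((k + 1 : ℕ) : ℝ) * a = m * tt n k + a := by
      unfold tt; rw [ha]; push_cast; ring
    have e2 : 2 * (k : ℝ) * a = m * tt n k - a := by
      unfold tt; rw [ha]; ring
    rw [e1, e2, sin_add, sin_sub]; ring
  have h : 2 * sin a * ∑ k ∈ Finset.range (2 * n), cos (m * tt n k) = 0 := by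
    rw [Finset.mul_sum, Finset.sum_congr rfl (fun k _ => key k),
      Finset.sum_range_sub (fun k : ℕ => sin (2 * (k : ℝ) * a))]
    have : 2 * ((2 * n : ℕ) : ℝ) * a = (2 * m : ℕ) * π := by
      rw [ha]; push_cast; field_simp
    rw [this, sin_nat_mul_pi]; simp
  rcases mul_eq_zero.mp h with h | h
  · linarith
  · exact h

lemma SS_second_diff {n : ℕ} (hn : 0 < n) (x : ℝ) :
    SS n (x + 1) - 2 * SS n x + SS n (x - 1) =
      -(1 / n) * ∑ k ∈ Finset.range (2 * n), sin (n * tt n k) * sin (x * tt n k) := by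
  have hn' : (n : ℝ) ≠ 0 := by positivity
  unfold SS
  rw [Finset.mul_sum, Finset.mul_sum, ← Finset.sum_sub_distrib, ← Finset.sum_add_distrib]
  refine Finset.sum_congr rfl fun k hk => ?_
  have h := cos_tt_lt (Finset.mem_range.mp hk)
  have e1 : (x + 1) * tt n k = x * tt n k + tt n k := by ring
  have e2 : (x - 1) * tt n k = x * tt n k - tt n k := by ring
  rw [e1, e2, sin_add, sin_sub]
  have e3 : aa n k * (1 - cos (tt n k)) = sin (n * tt n k) / (2 * n) := by
    unfold aa; field_simp
  have e4 : sin (n * tt n k) = aa n k * (1 - cos (tt n k)) * (2 * n) := by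
    rw [e3]; field_simp
  rw [e4]
  field_simp
  ring

lemma orth {n j : ℕ} (hj : 0 < j) (hjn : j < n) :
    ∑ k ∈ Finset.range (2 * n), sin (n * tt n k) * sin (j * tt n k) = 0 := by
  have h1 := sum_cos (n := n) (m := n - j) (by omega) (by omega)
  have h2 := sum_cos (n := n) (m := n + j) (by omega) (by omega)
  have : ∀ k, sin (n * tt n k) * sin (j * tt n k) =
      1 / 2 * (cos ((n - j : ℕ) * tt n k) - cos ((n + j : ℕ) * tt n k)) := by
    intro k
    rw [Nat.cast_sub hjn.le, Nat.cast_add, sub_mul, add_mul, cos_add, cos_sub]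
    ring
  rw [Finset.sum_congr rfl (fun k _ => this k), ← Finset.mul_sum, Finset.sum_sub_distrib, h1, h2]
  simp

lemma SS_zero (n : ℕ) : SS n 0 = 0 := by simp [SS]

lemma SS_lin {n : ℕ} : ∀ j : ℕ, j + 1 ≤ n →
    SS n j = j * SS n 1 ∧ SS n (j + 1 : ℕ) = (j + 1 : ℕ) * SS n 1 := by
  intro j
  induction j with
  | zero => intro _; simp [SS_zero]
  | succ j ih =>
    intro h
    obtain ⟨h1, h2⟩ := ih (by omega)
    refine ⟨h2, ?_⟩
    have h3 := SS_second_diff (n := n) (by omega) ((j + 1 : ℕ) : ℝ)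
    rw [orth (by omega) (by omega), h2] at h3
    have e : ((j + 1 : ℕ) : ℝ) - 1 = j := by push_cast; ring
    rw [e, h1] at h3
    push_cast at h3 ⊢
    linarith

lemma SS_one {n : ℕ} (hn : 0 < n) : SS n 1 = 1 := by
  have hn' : (n : ℝ) ≠ 0 := by positivity
  have h := SS_second_diff hn n
  have hs : ∑ k ∈ Finset.range (2 * n), sin (n * tt n k) * sin (n * tt n k) = 2 * n := by
    rw [Finset.sum_congr rfl (fun k _ => by rw [← sq, sin_n_tt_sq hn k])]
    simp
  have hsym : SS n (n + 1) = SS n (n - 1) := by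
    unfold SS
    refine Finset.sum_congr rfl fun k _ => ?_
    rw [add_mul, sub_mul, sin_add, sin_sub, cos_n_tt hn]
    ring
  rw [hs, hsym] at h
  obtain ⟨m, rfl⟩ : ∃ m, n = m + 1 := ⟨n - 1, by omega⟩
  obtain ⟨h1, h2⟩ := SS_lin (n := m + 1) m le_rfl
  have e : ((m + 1 : ℕ) : ℝ) - 1 = m := by push_cast; ring
  rw [e, h1, h2] at h
  have e2 : -(1 / ((m + 1 : ℕ) : ℝ)) * (2 * ((m + 1 : ℕ) : ℝ)) = -2 := by field_simp
  rw [e2] at h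
  push_cast at h
  linarith

lemma SS_eq {n j : ℕ} (hn : 0 < n) (hj : j ≤ n) : SS n j = j := by
  rcases j with _ | j
  · simp [SS_zero]
  · rw [(SS_lin j hj).2, SS_one hn, mul_one]

lemma riesz_T {n j : ℕ} (hn : 0 < n) (hj : j ≤ n) (θ : ℝ) :
    ∑ k ∈ Finset.range (2 * n), aa n k *
      ((T ℝ j).eval (cos (θ + tt n k)) - (T ℝ j).eval (cos (θ - tt n k))) =
    -2 * ((derivative (T ℝ j)).eval (cos θ) * sin θ) := by
  have h1 : (derivative (T ℝ j)).eval (cos θ) * sin θ = j * sin (j * θ) := by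
    have := U_real_cos θ ((j : ℤ) - 1)
    push_cast at this
    rw [sub_add_cancel] at this
    rw [T_derivative_eq_U, eval_mul, mul_assoc, this]
    simp
  rw [h1]
  have h2 := SS_eq hn hj
  calc _ = ∑ k ∈ Finset.range (2 * n), (-2 * sin (j * θ)) * (aa n k * sin (j * tt n k)) := by
        refine Finset.sum_congr rfl fun k _ => ?_
        rw [T_real_cos, T_real_cos]
        push_cast
        rw [mul_add (j : ℝ), mul_sub (j : ℝ), cos_add, cos_sub]
        ring
    _ = _ := by
        rw [← Finset.mul_sum]
        unfold SS at h2
        rw [h2]; ring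

lemma riesz {n : ℕ} (hn : 0 < n) (p : ℝ[X]) (hp : p.natDegree ≤ n) (θ : ℝ) :
    ∑ k ∈ Finset.range (2 * n), aa n k *
      (p.eval (cos (θ + tt n k)) - p.eval (cos (θ - tt n k))) =
    -2 * ((derivative p).eval (cos θ) * sin θ) := by
  have hmem : p ∈ degreeLT ℝ (n + 1) := by
    rw [mem_degreeLT]
    exact lt_of_le_of_lt degree_le_natDegree (by exact_mod_cast Nat.lt_succ_of_le hp)
  rw [← Sequence.span_degreeLT (chebyshevTsequence ℝ) (by simp)] at hmem
  clear hp
  induction hmem using Submodule.span_induction with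
  | mem x hx =>
    obtain ⟨j, hj, rfl⟩ := hx
    exact riesz_T hn (Nat.lt_succ_iff.mp hj) θ
  | zero => simp
  | add x y _ _ hx hy =>
    simp only [eval_add, derivative_add]
    rw [add_mul, mul_add, ← hx, ← hy, ← Finset.sum_add_distrib]
    exact Finset.sum_congr rfl fun k _ => by ring
  | smul c x _ hx =>
    simp only [eval_smul, derivative_smul, smul_eq_mul]
    rw [show -2 * (c * eval (cos θ) (derivative x) * sin θ) =
      c * (-2 * (eval (cos θ) (derivative x) * sin θ)) by ring, ← hx, Finset.mul_sum]
    exact Finset.sum_congr rfl fun k _ => by ring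

lemma bernstein {n : ℕ} (hn : 0 < n) (p : ℝ[X]) (hp : p.natDegree ≤ n)
    (hb : ∀ x ∈ Set.Icc (-1 : ℝ) 1, |p.eval x| ≤ 1) (θ : ℝ) :
    |(derivative p).eval (cos θ) * sin θ| ≤ n := by
  have h := riesz hn p hp θ
  have hA : ∑ k ∈ Finset.range (2 * n), |aa n k| = n := by
    rw [← SS_eq hn le_rfl, SS]
    refine Finset.sum_congr rfl fun k hk => ?_
    have h1 := cos_tt_lt (Finset.mem_range.mp hk)
    have hn' : (0 : ℝ) < n := by exact_mod_cast hn
    have h2 : aa n k * sin (n * tt n k) = 1 / (2 * n * (1 - cos (tt n k))) := by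
      rw [aa, div_mul_eq_mul_div, ← sq, sin_n_tt_sq hn]
    have h3 : |sin (n * tt n k)| = 1 := by
      rw [← sq_eq_sq₀ (abs_nonneg _) zero_le_one, sq_abs, sin_n_tt_sq hn, one_pow]
    rw [h2, aa, abs_div, h3, abs_of_pos (by positivity)]
  have hle : |∑ k ∈ Finset.range (2 * n), aa n k *
      (p.eval (cos (θ + tt n k)) - p.eval (cos (θ - tt n k)))| ≤ 2 * n := by
    refine (Finset.abs_sum_le_sum_abs _ _).trans ?_
    rw [← hA, Finset.mul_sum]
    refine Finset.sum_le_sum fun k _ => ?_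
    rw [abs_mul, mul_comm]
    refine mul_le_mul_of_nonneg_right ?_ (abs_nonneg _)
    have h1 := abs_le.mp (hb (cos (θ + tt n k)) (cos_mem_Icc _))
    have h2 := abs_le.mp (hb (cos (θ - tt n k)) (cos_mem_Icc _))
    rw [abs_le]
    constructor <;> linarith [h1.1, h1.2, h2.1, h2.2]
  rw [h, abs_mul] at hle
  norm_num at hle
  rw [abs_mul]
  exact hle

lemma T_deriv_le {n : ℕ} {x : ℝ} (hx : |x| ≤ 1) :
    (derivative (T ℝ n)).eval x ≤ (n : ℝ) ^ 2 := by
  have h := abs_iterate_derivative_T_real_le n 1 hx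
  have h2 : (derivative (T ℝ n)).eval 1 = (n : ℝ) ^ 2 := by
    rw [T_derivative_eq_U]
    simp [sq]
  simp only [Function.iterate_one] at h
  rw [h2] at h
  exact (le_abs_self _).trans h

lemma comparison (s : Finset ℝ) (A : ℝ) (hA : 0 ≤ A) (q R : ℝ[X])
    (hR : R = derivative (C A * ∏ c ∈ s, (X - C c)))
    (hq : q.degree < s.card) (hRd : R.degree < s.card)
    (hqR : ∀ c ∈ s, |q.eval c| ≤ |R.eval c|)
    (x : ℝ) (hx : ∀ c ∈ s, c ≤ x) : |q.eval x| ≤ R.eval x := by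
  have hinj : Set.InjOn (id : ℝ → ℝ) s := Set.injOn_id _
  have ev : ∀ f : ℝ[X], f.degree < s.card →
      f.eval x = ∑ c ∈ s, f.eval c * (Lagrange.basis s id c).eval x := by
    intro f hf
    conv_lhs => rw [Lagrange.eq_interpolate hinj hf]
    simp [Lagrange.interpolate_apply, eval_finsetSum]
  rw [ev q hq, ev R hRd]
  refine (Finset.abs_sum_le_sum_abs _ _).trans (Finset.sum_le_sum fun c hc => ?_)
  have hpos : 0 ≤ R.eval c * (Lagrange.basis s id c).eval x := by
    have h1 : R.eval c = A * ∏ j ∈ s.erase c, (c - j) := by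
      have := Lagrange.eval_nodal_derivative_eval_node_eq (v := (id : ℝ → ℝ)) hc
      rw [Lagrange.eval_nodal, Lagrange.nodal_eq] at this
      simp only [id] at this
      rw [hR, derivative_C_mul, eval_mul, eval_C, this]
    have h2 : (Lagrange.basis s id c).eval x = ∏ j ∈ s.erase c, ((c - j)⁻¹ * (x - j)) := by
      simp [Lagrange.basis, Lagrange.basisDivisor, eval_prod]
    rw [h1, h2, mul_assoc, ← Finset.prod_mul_distrib]
    refine mul_nonneg hA (Finset.prod_nonneg fun j hj => ?_)
    have hne : c - j ≠ 0 := sub_ne_zero.mpr (Finset.ne_of_mem_erase hj).symm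
    rw [mul_inv_cancel_left₀ hne]
    linarith [hx j (Finset.mem_of_mem_erase hj)]
  rw [abs_mul]
  calc _ ≤ |R.eval c| * |(Lagrange.basis s id c).eval x| :=
        mul_le_mul_of_nonneg_right (hqR c hc) (abs_nonneg _)
    _ = _ := by rw [← abs_mul, abs_of_nonneg hpos]

lemma near_one {n : ℕ} (hn : 0 < n) (p : ℝ[X]) (hp : p.natDegree ≤ n)
    (hb : ∀ x ∈ Set.Icc (-1 : ℝ) 1, |p.eval x| ≤ 1) (x : ℝ)
    (hx : cos (π / (2 * n)) ≤ x) (hx1 : x ≤ 1) : |(derivative p).eval x| ≤ (n : ℝ) ^ 2 := by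
  have hn' : (0 : ℝ) < n := by exact_mod_cast hn
  have hx0 : 0 ≤ x := by
    refine le_trans (cos_nonneg_of_mem_Icc ⟨?_, ?_⟩) hx
    · have : 0 < π / (2 * n) := by positivity
      linarith [pi_pos]
    · rw [div_le_div_iff₀ (by positivity) (by positivity)]
      have : (1 : ℝ) ≤ n := by exact_mod_cast hn
      nlinarith [pi_pos]
  refine le_trans ?_ (T_deriv_le (n := n) (x := x) (abs_le.mpr ⟨by linarith, hx1⟩))
  set s := (Finset.range n).image (fun (k : ℕ) => cos ((2 * k + 1) * π / (2 * n))) with hs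
  have hroots : (T ℝ n).roots = s.val := roots_T_real n
  have hcard : s.card = n := by
    have := roots_T_real_nodup n
    rw [hs, Finset.card_image_of_injOn, Finset.card_range]
    exact (Finset.nodup_map_iff_injOn (s := Finset.range n)).mp this
  have hdeg : (T ℝ n).natDegree = n := by simp
  have hT : T ℝ n = C (T ℝ n).leadingCoeff * ∏ c ∈ s, (X - C c) := by
    have := C_leadingCoeff_mul_prod_multiset_X_sub_C (p := T ℝ n) (by
      rw [hroots, hdeg]; exact hcard)
    rw [hroots] at this
    exact this.symm
  have dlt : ∀ f : ℝ[X], f.natDegree ≤ n → (derivative f).degree < s.card := by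
    intro f hf
    rw [hcard]
    by_cases h0 : f = 0
    · subst h0; simp
    refine (degree_derivative_lt h0).trans_le ?_
    exact degree_le_natDegree.trans (by exact_mod_cast hf)
  refine comparison s (T ℝ n).leadingCoeff ?_ _ _ (by rw [← hT]) (dlt p hp) (dlt _ hdeg.le) ?_ x ?_
  · rw [leadingCoeff_T]; positivity
  · intro c hc
    obtain ⟨k, hk, rfl⟩ := Finset.mem_image.mp hc
    have hk := Finset.mem_range.mp hk
    have hB := bernstein hn p hp hb (tt n k)
    have hU : (derivative (T ℝ n)).eval (cos (tt n k)) * sin (tt n k) = n * sin (n * tt n k) := by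
      have := U_real_cos (tt n k) ((n : ℤ) - 1)
      push_cast at this
      rw [sub_add_cancel] at this
      rw [T_derivative_eq_U, eval_mul, mul_assoc, this]
      simp
    have h3 : |sin (n * tt n k)| = 1 := by
      rw [← sq_eq_sq₀ (abs_nonneg _) zero_le_one, sq_abs, sin_n_tt_sq hn, one_pow]
    have hU' := congrArg abs hU
    rw [abs_mul (n : ℝ), h3, Nat.abs_cast, mul_one] at hU'
    rw [← hU', abs_mul, abs_mul] at hB
    have hsin : 0 < |sin (tt n k)| := by
      refine lt_of_le_of_ne (abs_nonneg _) fun h0 => ?_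
      rw [abs_mul, ← h0, mul_zero] at hU'
      linarith
    exact le_of_mul_le_mul_right hB hsin
  · intro c hc
    obtain ⟨k, hk, rfl⟩ := Finset.mem_image.mp hc
    have hk := Finset.mem_range.mp hk
    refine le_trans (cos_le_cos_of_nonneg_of_le_pi (by positivity) ?_ ?_) hx
    · rw [div_le_iff₀ (by positivity)]
      have : (k : ℝ) + 1 ≤ n := by exact_mod_cast hk
      nlinarith [pi_pos]
    · gcongr
      have : (0 : ℝ) ≤ k := by positivity
      nlinarith [pi_pos]

lemma middle {n : ℕ} (hn : 0 < n) (p : ℝ[X]) (hp : p.natDegree ≤ n)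
    (hb : ∀ x ∈ Set.Icc (-1 : ℝ) 1, |p.eval x| ≤ 1) (x : ℝ)
    (hx : |x| ≤ cos (π / (2 * n))) : |(derivative p).eval x| ≤ (n : ℝ) ^ 2 := by
  have hn' : (0 : ℝ) < n := by exact_mod_cast hn
  have hx1 : |x| ≤ 1 := hx.trans (cos_le_one _)
  have hB := bernstein hn p hp hb (arccos x)
  rw [cos_arccos (abs_le.mp hx1).1 (abs_le.mp hx1).2, sin_arccos, abs_mul] at hB
  have hj : 1 / (n : ℝ) ≤ sin (π / (2 * n)) := by
    have := mul_le_sin (x := π / (2 * n)) (by positivity) (by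
      rw [div_le_div_iff₀ (by positivity) (by positivity)]
      have : (1 : ℝ) ≤ n := by exact_mod_cast hn
      nlinarith [pi_pos])
    refine le_trans (le_of_eq ?_) this
    have := pi_pos.ne'
    field_simp
  have hs : 1 / (n : ℝ) ≤ √(1 - x ^ 2) := by
    refine hj.trans (Real.le_sqrt_of_sq_le ?_)
    rw [sin_sq]
    have : x ^ 2 ≤ cos (π / (2 * n)) ^ 2 := by
      rw [← sq_abs x]
      exact pow_le_pow_left₀ (abs_nonneg _) hx 2
    linarith
  have h2 : |(derivative p).eval x| * (1 / n) ≤ n := by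
    refine le_trans (mul_le_mul_of_nonneg_left ?_ (abs_nonneg _)) hB
    exact hs.trans (le_abs_self _)
  rw [mul_one_div, div_le_iff₀ hn'] at h2
  linarith [sq (n : ℝ)]

end MarkovAux

/-- Markov's theorem: a polynomial of degree at most `d` bounded by `1` on `[-1,1]` has
derivative bounded by `d²` on `[-1,1]`. -/
theorem markov_brothers_inequality (d : ℕ) (p : Polynomial ℝ) (hp : p.natDegree ≤ d)
    (hbdd : ∀ x ∈ Set.Icc (-1 : ℝ) 1, |p.eval x| ≤ 1) :
    ∀ x ∈ Set.Icc (-1 : ℝ) 1, |p.derivative.eval x| ≤ (d : ℝ) ^ 2 := by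
  intro x hx
  rcases Nat.eq_zero_or_pos d with rfl | hd
  · rw [Polynomial.derivative_of_natDegree_zero (Nat.le_zero.mp hp)]
    simp
  by_cases h1 : |x| ≤ Real.cos (Real.pi / (2 * d))
  · exact MarkovAux.middle hd p hp hbdd x h1
  push Not at h1
  rcases le_total 0 x with h0 | h0
  · rw [abs_of_nonneg h0] at h1
    exact MarkovAux.near_one hd p hp hbdd x h1.le hx.2
  · rw [abs_of_nonpos h0] at h1
    have := MarkovAux.near_one hd (p.comp (-Polynomial.X)) (by
        rw [Polynomial.natDegree_comp]; simpa using hp) (by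
        intro y hy
        rw [Polynomial.eval_comp]
        simp only [Polynomial.eval_neg, Polynomial.eval_X]
        exact hbdd (-y) ⟨by linarith [hy.2], by linarith [hy.1]⟩) (-x) h1.le (by linarith [hx.1])
    simpa [Polynomial.derivative_comp, Polynomial.eval_comp] using this
end

section
/- There exists a constant C > 0 such that for every positive integer d there exists a real polynomial p of degree at most d satisfying sup_{x ∈ [0,∞)} |e^{-x} - p(x)/(1 + x/d)^d| ≤ C·d·2^{-d}. -/
open Polynomial in
lemma ssv_poly_transform (d : ℕ) (q : Polynomial ℝ) (hq : q.natDegree ≤ d) (c : ℝ) :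
    ∃ p : Polynomial ℝ, p.natDegree ≤ d ∧ ∀ x : ℝ, 1 + x * c ≠ 0 →
      p.eval x / (1 + x * c) ^ d = q.eval (1 + x * c)⁻¹ := by
  refine ⟨∑ i ∈ Finset.range (d + 1), C (q.coeff i) * (1 + X * C c) ^ (d - i), ?_, ?_⟩
  · refine natDegree_sum_le_of_forall_le _ _ fun i hi => ?_
    refine (natDegree_C_mul_le _ _).trans ?_
    refine natDegree_pow_le.trans ?_
    have : (1 + X * C c : Polynomial ℝ).natDegree ≤ 1 := by compute_degree
    calc _ ≤ (d - i) * 1 := Nat.mul_le_mul_left _ this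
      _ ≤ d := by omega
  · intro x hx
    rw [eval_eq_sum_range' (Nat.lt_succ_of_le hq), eval_finsetSum, Finset.sum_div]
    refine Finset.sum_congr rfl fun i hi => ?_
    have hi : i ≤ d := by simpa [Nat.lt_succ_iff] using hi
    simp only [eval_mul, eval_C, eval_pow, eval_add, eval_one, eval_X, inv_pow]
    rw [pow_sub₀ _ hx hi]
    field_simp

lemma ssv_rolle_step (g g' : ℝ → ℝ) (hg : ∀ x, 0 < x → HasDerivAt g (g' x) x) (m : ℕ)
    (S : Finset ℝ) (hS : S.card = m + 1) (hI : ∀ x ∈ S, 0 < x ∧ x ≤ 1)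
    (h0 : ∀ x ∈ S, g x = 0) :
    ∃ T : Finset ℝ, T.card = m ∧ (∀ x ∈ T, 0 < x ∧ x ≤ 1) ∧ ∀ x ∈ T, g' x = 0 := by
  set e := S.orderEmbOfFin hS
  have he : ∀ i, e i ∈ S := fun i => S.orderEmbOfFin_mem hS i
  have key : ∀ i : Fin m, ∃ c ∈ Set.Ioo (e i.castSucc) (e i.succ), g' c = 0 := by
    intro i
    refine exists_hasDerivAt_eq_zero (f := g) (e.strictMono Fin.castSucc_lt_succ) ?_ ?_ ?_
    · intro x hx
      exact (hg x ((hI _ (he _)).1.trans_le hx.1)).continuousAt.continuousWithinAt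
    · rw [h0 _ (he _), h0 _ (he _)]
    · intro x hx
      exact hg x ((hI _ (he _)).1.trans hx.1)
  choose c hc hc0 using key
  have hmono : StrictMono c := by
    intro i j hij
    refine (hc i).2.trans_le (le_trans ?_ (hc j).1.le)
    exact e.monotone (by rw [Fin.le_def]; simpa using hij)
  refine ⟨Finset.univ.image c, ?_, ?_, ?_⟩
  · rw [Finset.card_image_of_injective _ hmono.injective]; simp
  · intro x hx
    obtain ⟨i, -, rfl⟩ := Finset.mem_image.1 hx
    exact ⟨(hI _ (he _)).1.trans (hc i).1, (hc i).2.le.trans (hI _ (he _)).2⟩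
  · intro x hx
    obtain ⟨i, -, rfl⟩ := Finset.mem_image.1 hx
    exact hc0 i

lemma ssv_rolle (n : ℕ) : ∀ (g : ℕ → ℝ → ℝ)
    (_ : ∀ k x, 0 < x → HasDerivAt (g k) (g (k + 1) x) x)
    (S : Finset ℝ) (_ : S.card = n + 1) (_ : ∀ x ∈ S, 0 < x ∧ x ≤ 1)
    (_ : ∀ x ∈ S, g 0 x = 0), ∃ ξ, 0 < ξ ∧ ξ ≤ 1 ∧ g n ξ = 0 := by
  induction n with
  | zero =>
    intro g hg S hS hI h0
    obtain ⟨a, rfl⟩ := Finset.card_eq_one.1 hS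
    exact ⟨a, (hI a (by simp)).1, (hI a (by simp)).2, h0 a (by simp)⟩
  | succ n ih =>
    intro g hg S hS hI h0
    obtain ⟨T, hT, hTI, hT0⟩ := ssv_rolle_step (g 0) (g 1) (hg 0) _ S hS hI h0
    exact ih (fun k => g (k + 1)) (fun k => hg (k + 1)) T hT hTI hT0

open Polynomial in
lemma ssv_nodes (n : ℕ) (hn : 0 < n) : ∃ (Ω : Polynomial ℝ) (S : Finset ℝ), S.card = n ∧
    (∀ x ∈ S, 0 < x ∧ x ≤ 1) ∧ (∀ x ∈ S, Ω.eval x = 0) ∧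
    (∀ x, Ω.eval x = 0 → x ∈ S) ∧
    (∀ x, 0 ≤ x → x ≤ 1 → |Ω.eval x| ≤ 1) ∧
    ∀ x, (derivative^[n] Ω).eval x = n.factorial * 2 ^ (2 * n - 1) := by
  have hq1 : (C 2 * X - C 1 : ℝ[X]).natDegree = 1 := by compute_degree!
  have hql : (C 2 * X - C 1 : ℝ[X]).leadingCoeff = 2 := by
    rw [leadingCoeff, hq1]; simp [coeff_X, coeff_one]
  have hdeg : ((Chebyshev.T ℝ n).comp (C 2 * X - C 1)).natDegree = n := by
    rw [natDegree_comp, hq1, Chebyshev.natDegree_T]; simp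
  have hlead : ((Chebyshev.T ℝ n).comp (C 2 * X - C 1)).coeff n = 2 ^ (2 * n - 1) := by
    have := leadingCoeff_comp (p := Chebyshev.T ℝ n) (q := (C 2 * X - C 1 : ℝ[X])) (by rw [hq1]; simp)
    rw [leadingCoeff, hdeg] at this
    rw [this, hql, Chebyshev.leadingCoeff_T, Chebyshev.natDegree_T, ← pow_add]
    congr 1; simp; omega
  have hroot : ∀ y, (Chebyshev.T ℝ n).eval y = 0 ↔ y ∈ (Chebyshev.T ℝ n).roots := by
    intro y
    rw [mem_roots (Chebyshev.T_ne_zero ℝ n)]; rfl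
  have hev : ∀ x, ((Chebyshev.T ℝ n).comp (C 2 * X - C 1)).eval x
      = (Chebyshev.T ℝ n).eval (2 * x - 1) := by intro x; simp [eval_comp]
  refine ⟨(Chebyshev.T ℝ n).comp (C 2 * X - C 1),
    ((Finset.range n).image (fun (k : ℕ) => Real.cos ((2 * k + 1) * Real.pi / (2 * n)))).image
      (fun y => (1 + y) / 2), ?_, ?_, ?_, ?_, ?_, ?_⟩
  · rw [Finset.card_image_of_injective, Finset.card_image_of_injOn, Finset.card_range]
    · exact (Finset.range n).nodup_map_iff_injOn.mp (Chebyshev.roots_T_real_nodup n)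
    · intro a b h; simp only at h; linarith
  · intro x hx
    simp only [Finset.mem_image, Finset.mem_range] at hx
    obtain ⟨y, ⟨k, hk, rfl⟩, rfl⟩ := hx
    have h1 := Real.cos_le_one ((2 * k + 1) * Real.pi / (2 * n))
    have h2 : Real.cos Real.pi < Real.cos ((2 * k + 1) * Real.pi / (2 * n)) := by
      have hn' : (0:ℝ) < n := by exact_mod_cast hn
      apply Real.cos_lt_cos_of_nonneg_of_le_pi (by positivity) le_rfl
      rw [div_lt_iff₀ (by positivity)]
      have : (k:ℝ) + 1 ≤ n := by exact_mod_cast hk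
      nlinarith [Real.pi_pos]
    rw [Real.cos_pi] at h2
    constructor <;> linarith
  · intro x hx
    rw [hev, hroot, Chebyshev.roots_T_real]
    obtain ⟨y, hy, rfl⟩ := Finset.mem_image.1 hx
    have : 2 * ((1 + y) / 2) - 1 = y := by ring
    rw [this]; exact hy
  · intro x hx
    rw [hev, hroot, Chebyshev.roots_T_real] at hx
    exact Finset.mem_image.2 ⟨_, hx, by ring⟩
  · intro x h0 h1
    rw [hev]
    exact Chebyshev.abs_eval_T_real_le_one _ (abs_le.2 ⟨by linarith, by linarith⟩)
  · intro x
    have h0 := natDegree_iterate_derivative ((Chebyshev.T ℝ n).comp (C 2 * X - C 1)) n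
    rw [hdeg, Nat.sub_self] at h0
    rw [eq_C_of_natDegree_le_zero h0, eval_C, coeff_iterate_derivative]
    simp only [zero_add]
    rw [hlead, Nat.descFactorial_self]; simp

lemma ssv_cauchy (d n : ℕ) (r ξ : ℝ) (hr0 : 0 < r) (hr1 : r < 1) (hξ : 0 < ξ) :
    ‖iteratedDeriv n (fun z : ℂ => Complex.exp (d - d / z)) ξ‖ ≤
      n.factorial * Real.exp (d - d / (ξ * (1 + r))) / (r * ξ) ^ n := by
  have hne : ∀ z ∈ Metric.closedBall (ξ : ℂ) (r * ξ), z ≠ 0 := by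
    rintro z hz rfl
    rw [mem_closedBall_iff_norm] at hz
    simp [abs_of_pos hξ] at hz
    nlinarith
  apply Complex.norm_iteratedDeriv_le_of_forall_mem_sphere_norm_le n (by positivity)
  · apply DifferentiableOn.diffContOnCl
    rw [closure_ball _ (by positivity)]
    intro z hz
    have := hne z hz
    apply DifferentiableAt.differentiableWithinAt
    fun_prop (disch := assumption)
  · intro z hz
    have hz0 := hne z (Metric.sphere_subset_closedBall hz)
    rw [Complex.norm_exp]
    apply Real.exp_le_exp.2
    have hsq : (z.re - ξ) ^ 2 + z.im ^ 2 = (r * ξ) ^ 2 := by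
      rw [mem_sphere_iff_norm] at hz
      rw [← hz, Complex.sq_norm, Complex.normSq_apply]; simp; ring
    have hre : z.re ≤ ξ * (1 + r) := by
      have : z.re - ξ ≤ r * ξ := by
        apply le_of_abs_le; refine abs_le_of_sq_le_sq (by nlinarith [sq_nonneg z.im]) (by positivity)
      linarith
    have hpos : 0 < Complex.normSq z := Complex.normSq_pos.2 hz0
    have hk : 1 / (ξ * (1 + r)) ≤ z.re / Complex.normSq z := by
      rw [div_le_div_iff₀ (by positivity) hpos, Complex.normSq_apply]
      nlinarith [mul_nonneg (mul_nonneg hξ.le (sub_pos.2 hr1).le) (sub_nonneg.2 hre)]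
    have : ((d : ℂ) - d / z).re = d - d * (z.re / Complex.normSq z) := by
      simp [div_eq_mul_inv, Complex.mul_re, Complex.inv_re]
    rw [this]
    have := mul_le_mul_of_nonneg_left hk (Nat.cast_nonneg (α := ℝ) d)
    have e : (d:ℝ) / (ξ * (1 + r)) = d * (1 / (ξ * (1 + r))) := by ring
    rw [e]; linarith

lemma ssv_bound (d : ℕ) (hd : 0 < d) (ξ : ℝ) (hξ : 0 < ξ) :
    ‖iteratedDeriv (d + 1) (fun z : ℂ => Complex.exp (d - d / z)) ξ‖ ≤
      (d + 1).factorial * (2 ^ (d + 2) * Real.exp (1 / 2)) := by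
  have hd' : (0:ℝ) < d := by exact_mod_cast hd
  set n : ℝ := d + 1 with hn
  have hn0 : 0 < n := by positivity
  have hr1 : n / (n + 1) < 1 := by rw [div_lt_one (by positivity)]; linarith
  refine (ssv_cauchy d (d + 1) (n / (n + 1)) ξ (by positivity) hr1 hξ).trans ?_
  rw [mul_div_assoc]
  apply mul_le_mul_of_nonneg_left _ (by positivity)
  set r := n / (n + 1) with hr
  have hr0 : 0 < r := by positivity
  set y := 1 / (ξ * (1 + r)) with hy
  have hy0 : 0 < y := by positivity
  have e1 : (d:ℝ) / (ξ * (1 + r)) = d * y := by rw [hy]; ring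
  have e2 : 1 / (r * ξ) = (y * d / n) * (1 + 1 / d) * (2 * (1 + 1 / (2 * n))) := by
    have h1 : 1 + 1 / (d:ℝ) = n / d := by rw [hn]; field_simp
    have h2 : 2 * (1 + 1 / (2 * n)) = (1 + r) / r := by rw [hr]; field_simp; ring
    rw [h1, h2, hy]; field_simp
  have b1 : (y * d / n) ^ (d + 1) ≤ Real.exp (y * d - n) := by
    have : y * d / n ≤ Real.exp (y * d / n - 1) := by
      have := Real.add_one_le_exp (y * d / n - 1); linarith
    refine (pow_le_pow_left₀ (by positivity) this _).trans (le_of_eq ?_)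
    rw [← Real.exp_nat_mul]; congr 1; push_cast; rw [← hn]; field_simp
  have b2 : (1 + 1 / (d:ℝ)) ^ (d + 1) ≤ Real.exp 1 * 2 := by
    rw [pow_succ]
    apply mul_le_mul _ _ (by positivity) (by positivity)
    · have : 1 + 1 / (d:ℝ) ≤ Real.exp (1 / d) := by
        have := Real.add_one_le_exp (1 / (d:ℝ)); linarith
      refine (pow_le_pow_left₀ (by positivity) this _).trans (le_of_eq ?_)
      rw [← Real.exp_nat_mul]; congr 1; field_simp
    · have : 1 / (d:ℝ) ≤ 1 := by
        rw [div_le_one hd']; exact_mod_cast hd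
      linarith
  have b3 : (1 + 1 / (2 * n)) ^ (d + 1) ≤ Real.exp (1 / 2) := by
    have : 1 + 1 / (2 * n) ≤ Real.exp (1 / (2 * n)) := by
      have := Real.add_one_le_exp (1 / (2 * n)); linarith
    refine (pow_le_pow_left₀ (by positivity) this _).trans (le_of_eq ?_)
    rw [← Real.exp_nat_mul]; congr 1; push_cast; rw [← hn]; field_simp
  rw [e1, div_eq_mul_one_div, ← one_div_pow, e2, mul_pow, mul_pow, mul_pow 2]
  calc Real.exp (d - d * y) * ((y * d / n) ^ (d + 1) * (1 + 1 / (d:ℝ)) ^ (d + 1)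
        * (2 ^ (d + 1) * (1 + 1 / (2 * n)) ^ (d + 1)))
      ≤ Real.exp (d - d * y) * (Real.exp (y * d - n) * (Real.exp 1 * 2)
        * (2 ^ (d + 1) * Real.exp (1 / 2))) := by gcongr
    _ = (Real.exp (d - d * y) * Real.exp (y * d - n) * Real.exp 1) *
          (2 ^ (d + 2) * Real.exp (1 / 2)) := by ring
    _ = 2 ^ (d + 2) * Real.exp (1 / 2) := by
      rw [← Real.exp_add, ← Real.exp_add]
      have : (d:ℝ) - d * y + (y * d - n) + 1 = 0 := by rw [hn]; ring
      rw [this]; simp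

lemma ssv_deriv (d k : ℕ) (x : ℝ) (hx : 0 < x) :
    HasDerivAt (fun t : ℝ => (iteratedDeriv k (fun z : ℂ => Complex.exp (d - d / z)) t).re)
      (iteratedDeriv (k + 1) (fun z : ℂ => Complex.exp (d - d / z)) x).re x := by
  have hx' : (x : ℂ) ≠ 0 := by exact_mod_cast hx.ne'
  have ha : AnalyticAt ℂ (fun z : ℂ => Complex.exp (d - d / z)) x := by
    fun_prop (disch := assumption)
  have := ha.iterated_deriv k
  rw [← iteratedDeriv_eq_iterate] at this
  rw [iteratedDeriv_succ]
  exact this.differentiableAt.hasDerivAt.real_of_complex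

open Polynomial in
lemma ssv_approx (d : ℕ) (hd : 0 < d) : ∃ q : Polynomial ℝ, q.natDegree ≤ d ∧
    ∀ u : ℝ, 0 < u → u ≤ 1 →
      |Real.exp (d - d / u) - q.eval u| ≤ 2 ^ (d + 2) * Real.exp (1 / 2) / 2 ^ (2 * d + 1) := by
  obtain ⟨Ω, S, hcard, hSI, hS0, hS1, hΩ, hder⟩ := ssv_nodes (d + 1) (Nat.succ_pos d)
  set F : ℂ → ℂ := fun z : ℂ => Complex.exp (d - d / z) with hF
  have hFre : ∀ t : ℝ, (F t).re = Real.exp (d - d / t) := by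
    intro t
    have : F t = ((Real.exp (d - d / t) : ℝ) : ℂ) := by simp [hF]
    rw [this, Complex.ofReal_re]
  set q := Lagrange.interpolate S id (fun t => Real.exp (d - d / t)) with hq
  have hqd : q.degree < ((d + 1 : ℕ) : WithBot ℕ) := by
    rw [← hcard]; exact Lagrange.degree_interpolate_lt _ Function.injective_id.injOn
  have hqe : ∀ t ∈ S, q.eval t = Real.exp (d - d / t) := fun t ht =>
    Lagrange.eval_interpolate_at_node (v := id) _ Function.injective_id.injOn ht
  refine ⟨q, ?_, ?_⟩
  · by_cases h0 : q = 0
    · rw [h0]; simp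
    · exact Nat.lt_succ_iff.1 ((natDegree_lt_iff_degree_lt h0).2 hqd)
  intro u hu0 hu1
  by_cases hu : u ∈ S
  · rw [hqe u hu]; simp; positivity
  have hΩu : Ω.eval u ≠ 0 := fun h => hu (hS1 u h)
  set c := (Real.exp (d - d / u) - q.eval u) / Ω.eval u with hc
  obtain ⟨ξ, hξ0, hξ1, hξ⟩ := ssv_rolle (d + 1)
    (fun k t => (iteratedDeriv k F t).re - (derivative^[k] q).eval t - c * (derivative^[k] Ω).eval t)
    (by
      intro k x hx
      have h1 := ssv_deriv d k x hx
      have h2 := (derivative^[k] q).hasDerivAt x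
      have h3 := ((derivative^[k] Ω).hasDerivAt x).const_mul c
      rw [← Function.iterate_succ_apply' (f := derivative)] at h2 h3
      exact (h1.sub h2).sub h3)
    (insert u S) (by rw [Finset.card_insert_of_notMem hu, hcard])
    (by
      intro x hx
      rcases Finset.mem_insert.1 hx with rfl | hx
      · exact ⟨hu0, hu1⟩
      · exact hSI x hx)
    (by
      intro x hx
      simp only [iteratedDeriv_zero, Function.iterate_zero, id]
      rw [hFre]
      rcases Finset.mem_insert.1 hx with rfl | hx
      · rw [hc]; field_simp; ring
      · rw [hqe x hx, hS0 x hx]; ring)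
  rw [iterate_derivative_eq_zero_of_degree_lt hqd, hder] at hξ
  have hb := (Complex.abs_re_le_norm _).trans (ssv_bound d hd ξ hξ0)
  rw [← hF] at hb
  have e : (iteratedDeriv (d + 1) F ξ).re = c * ((d + 1).factorial * 2 ^ (2 * (d + 1) - 1)) := by
    rw [eval_zero] at hξ; linarith
  have e' : 2 * (d + 1) - 1 = 2 * d + 1 := by omega
  rw [e, abs_mul, e', abs_of_pos (a := ((d + 1).factorial : ℝ) * 2 ^ (2 * d + 1)) (by positivity)] at hb
  have hfac : (0:ℝ) < (d + 1).factorial := by positivity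
  have hcb : |c| ≤ 2 ^ (d + 2) * Real.exp (1 / 2) / 2 ^ (2 * d + 1) := by
    rw [le_div_iff₀ (by positivity)]
    refine le_of_mul_le_mul_left ?_ hfac
    linarith
  have : Real.exp (d - d / u) - q.eval u = c * Ω.eval u := by rw [hc]; field_simp
  rw [this, abs_mul]
  calc |c| * |Ω.eval u| ≤ |c| * 1 := by gcongr; exact hΩ u hu0.le hu1
    _ ≤ _ := by rw [mul_one]; exact hcb

/-- Saff–Schönhage–Varga: for every `d` there is a polynomial `p` of degree at most `d` such
that the rational function `p(x)/(1+x/d)^d` (with all poles at `-d`) approximates `e^{-x}` on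
`[0, ∞)` up to `O(d·2^{-d})`. -/
theorem exp_rational_approx_negative_poles :
    ∃ C : ℝ, 0 < C ∧ ∀ d : ℕ, 0 < d →
      ∃ p : Polynomial ℝ, p.natDegree ≤ d ∧
        ∀ x : ℝ, 0 ≤ x →
          |Real.exp (-x) - p.eval x / (1 + x / d) ^ d| ≤ C * d * (2 : ℝ) ^ (-(d : ℤ)) := by
  refine ⟨2 * Real.exp (1 / 2), by positivity, fun d hd => ?_⟩
  have hd' : (1:ℝ) ≤ d := by exact_mod_cast hd
  obtain ⟨q, hq, hqa⟩ := ssv_approx d hd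
  obtain ⟨p, hp, hpe⟩ := ssv_poly_transform d q hq (1 / d)
  refine ⟨p, hp, fun x hx => ?_⟩
  have hpos : 0 < 1 + x * (1 / (d:ℝ)) := by positivity
  have e : 1 + x / (d:ℝ) = 1 + x * (1 / d) := by ring
  rw [e, hpe x hpos.ne']
  have h1 : 1 ≤ 1 + x * (1 / (d:ℝ)) := by
    have : 0 ≤ x * (1 / (d:ℝ)) := by positivity
    linarith
  have := hqa (1 + x * (1 / (d:ℝ)))⁻¹ (by positivity) (inv_le_one_of_one_le₀ h1)
  have e2 : (d:ℝ) - d / (1 + x * (1 / (d:ℝ)))⁻¹ = -x := by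
    rw [div_inv_eq_mul]; field_simp; ring
  rw [e2] at this
  refine this.trans ?_
  rw [zpow_neg, zpow_natCast]
  have e3 : (2:ℝ) ^ (d + 2) * Real.exp (1 / 2) / 2 ^ (2 * d + 1)
      = 2 * Real.exp (1 / 2) * 1 * (2 ^ d)⁻¹ := by
    have : (2:ℝ) ^ (2 * d + 1) = 2 ^ d * 2 ^ d * 2 := by ring
    rw [this, pow_add]; field_simp
  rw [e3]
  gcongr
end

section
/- There exists an absolute constant C > 0 such that for all ε, δ ∈ (0,1] there exist a positive integer N with N ≤ C·(1 + log(1/(εδ)))^C, positive reals w_1, ..., w_N, and positive reals t_1, ..., t_N with t_j ≤ (C/(εδ))^C for all j, such that for every x ∈ [ε, 1]: (1-δ)·x^{-1} ≤ Σ_{j=1}^{N} w_j·e^{-t_j·x} ≤ (1+δ)·x^{-1}. -/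
open MeasureTheory in
lemma tchak (n : ℕ) (γ : ℝ) (hγ : 0 < γ) :
    ∃ (m : ℕ) (s v : Fin m → ℝ), m ≤ n + 1 ∧ (∀ i, 0 < v i) ∧ ∑ i, v i = 1 ∧
      (∀ i, s i ∈ Set.Icc (1 : ℝ) 2) ∧
      ∀ k < n, |(∫ s in (1 : ℝ)..2, s ^ k) - ∑ i, v i * s i ^ k| ≤ γ := by
  let g : ℝ → (Fin n → ℝ) := fun s k => s ^ (k : ℕ)
  have hgc : Continuous g := by fun_prop
  let μ : Measure ℝ := volume.restrict (Set.Ioc 1 2)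
  have : IsProbabilityMeasure μ := ⟨by simp [μ]; norm_num⟩
  have hgi : Integrable g μ := (hgc.integrableOn_Icc (a := 1) (b := 2)).mono_set
    Set.Ioc_subset_Icc_self
  have hmem : (∫ x, g x ∂μ) ∈ closure (convexHull ℝ (g '' Set.Icc 1 2)) := by
    refine ((convex_convexHull ℝ _).closure).integral_mem isClosed_closure ?_ hgi
    filter_upwards [ae_restrict_mem measurableSet_Ioc] with x hx
    exact subset_closure (subset_convexHull ℝ _ ⟨x, Set.Ioc_subset_Icc_self hx, rfl⟩)
  obtain ⟨p, hp, hd⟩ := Metric.mem_closure_iff.1 hmem γ hγ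
  obtain ⟨ι, hι, z, w, hz, hai, hw, hw1, hwz⟩ := eq_pos_convex_span_of_mem_convexHull hp
  have hcard : Fintype.card ι ≤ n + 1 := by
    refine hai.card_le_finrank_succ.trans ?_
    have := Submodule.finrank_le (vectorSpan ℝ (Set.range z))
    simp only [Module.finrank_fintype_fun_eq_card, Fintype.card_fin] at this
    omega
  have hz' : ∀ i, ∃ x ∈ Set.Icc (1 : ℝ) 2, g x = z i := fun i => hz ⟨i, rfl⟩
  choose s hs hsz using hz'
  let e := (Fintype.equivFin ι).symm
  refine ⟨Fintype.card ι, s ∘ e, w ∘ e, hcard, fun i => hw _, ?_, fun i => hs _, ?_⟩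
  · rw [← hw1]; exact Equiv.sum_comp e w
  · intro k hk
    have h1 : (∑ i, (w ∘ e) i * (s ∘ e) i ^ k) = p ⟨k, hk⟩ := by
      rw [← hwz]
      simp only [Finset.sum_apply, Pi.smul_apply, ← hsz, smul_eq_mul, g]
      exact Equiv.sum_comp e (fun i => w i * s i ^ k)
    have h2 : (∫ s in (1 : ℝ)..2, s ^ k) = (∫ x, g x ∂μ) ⟨k, hk⟩ := by
      rw [intervalIntegral.integral_of_le (by norm_num),
        eval_integral (fun i => (hgi.eval i))]
    rw [h1, h2, ← Real.dist_eq]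
    exact (dist_le_pi_dist _ _ _).trans hd.le

lemma taylorB (L z : ℝ) (n : ℕ) (hz : 0 ≤ z) (hzL : z ≤ 2 * L) (hn : 9 * L ≤ n) :
    |Real.exp (-z) - ∑ k ∈ Finset.range n, (-z) ^ k / k.factorial| ≤ 2 * Real.exp (-(3 * L)) := by
  have h := Complex.exp_bound' (x := ((-z : ℝ) : ℂ)) (n := n) (by
    rw [Complex.norm_real, Real.norm_eq_abs, abs_neg, abs_of_nonneg hz, div_le_iff₀ (by positivity)]
    push_cast
    linarith)
  rw [Complex.norm_real, Real.norm_eq_abs (-z), abs_neg, abs_of_nonneg hz] at h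
  have h' : ‖Complex.exp ((-z : ℝ) : ℂ) - ∑ m ∈ Finset.range n, ((-z : ℝ) : ℂ) ^ m / m.factorial‖
      = |Real.exp (-z) - ∑ k ∈ Finset.range n, (-z) ^ k / k.factorial| := by
    rw [← Real.norm_eq_abs, ← Complex.norm_real]; push_cast; rfl
  rw [h'] at h
  refine h.trans ?_
  have h1 := Real.pow_div_factorial_le_exp (x := Real.exp 1 * z) (by positivity) n
  have h2 : z ^ n / n.factorial = ((Real.exp 1 * z) ^ n / n.factorial) * Real.exp (-n) := by
    rw [mul_pow, ← Real.exp_nat_mul, Real.exp_neg]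
    field_simp
  have h3 : z ^ n / n.factorial ≤ Real.exp (-(3 * L)) := by
    rw [h2]
    calc _ ≤ Real.exp (Real.exp 1 * z) * Real.exp (-n) := by gcongr
      _ ≤ _ := by
        rw [← Real.exp_add]
        apply Real.exp_le_exp.2
        have := Real.exp_one_lt_d9
        nlinarith
  linarith

lemma piece (L : ℝ) (n m : ℕ) (hL : 0 < L) (hn : 9 * L ≤ n) (s v : Fin m → ℝ)
    (hv : ∀ i, 0 < v i) (hv1 : ∑ i, v i = 1) (hs : ∀ i, s i ∈ Set.Icc (1 : ℝ) 2)
    (hm : ∀ k < n, |(∫ s in (1 : ℝ)..2, s ^ k) - ∑ i, v i * s i ^ k| ≤ Real.exp (-(3 * L)))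
    (y : ℝ) (hy : 0 < y) :
    |y * ∑ i, v i * Real.exp (-(s i * y)) - (Real.exp (-y) - Real.exp (-(2 * y)))|
      ≤ 5 * Real.exp (-(L / 2)) := by
  rcases le_total y L with hyL | hyL
  · have hint : y * ∫ s in (1 : ℝ)..2, Real.exp (-(s * y)) = Real.exp (-y) - Real.exp (-(2 * y)) := by
      have : ∀ x ∈ Set.uIcc (1 : ℝ) 2, HasDerivAt (fun s => - Real.exp (-(s * y)) / y)
          (Real.exp (-(x * y))) x := by
        intro x _
        have := (((((hasDerivAt_id x).mul_const y).fun_neg).exp).fun_neg).div_const y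
        refine this.congr_deriv ?_
        simp only [id_eq]
        field_simp
      rw [intervalIntegral.integral_eq_sub_of_hasDerivAt this
        (Continuous.intervalIntegrable (by fun_prop) _ _)]
      field_simp
      simp; ring
    let P : ℝ → ℝ := fun s => ∑ k ∈ Finset.range n, (-(s * y)) ^ k / k.factorial
    have hP : ∀ s ∈ Set.Icc (1 : ℝ) 2, |Real.exp (-(s * y)) - P s| ≤ 2 * Real.exp (-(3 * L)) := by
      intro s hs
      exact taylorB L (s * y) n (by nlinarith [hs.1]) (by nlinarith [hs.1, hs.2]) hn
    have h1 : |∑ i, v i * Real.exp (-(s i * y)) - ∑ i, v i * P (s i)| ≤ 2 * Real.exp (-(3 * L)) := by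
      rw [← Finset.sum_sub_distrib]
      calc _ ≤ ∑ i, |v i * Real.exp (-(s i * y)) - v i * P (s i)| := Finset.abs_sum_le_sum_abs _ _
        _ ≤ ∑ i, v i * (2 * Real.exp (-(3 * L))) := by
          refine Finset.sum_le_sum fun i _ => ?_
          rw [← mul_sub, abs_mul, abs_of_pos (hv i)]
          exact mul_le_mul_of_nonneg_left (hP _ (hs i)) (hv i).le
        _ = _ := by rw [← Finset.sum_mul, hv1, one_mul]
    have hPc : Continuous P := by fun_prop
    have h2 : |(∫ s in (1 : ℝ)..2, Real.exp (-(s * y))) - ∫ s in (1 : ℝ)..2, P s|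
        ≤ 2 * Real.exp (-(3 * L)) := by
      rw [← intervalIntegral.integral_sub (Continuous.intervalIntegrable (by fun_prop) _ _)
        (hPc.intervalIntegrable _ _)]
      have := intervalIntegral.norm_integral_le_of_norm_le_const (a := (1 : ℝ)) (b := 2)
        (f := fun s => Real.exp (-(s * y)) - P s) (C := 2 * Real.exp (-(3 * L))) (by
          intro x hx
          rw [Set.uIoc_of_le (by norm_num)] at hx
          exact hP x (Set.Ioc_subset_Icc_self hx))
      rw [Real.norm_eq_abs] at this
      norm_num at this ⊢
      exact this
    have h3 : |(∫ s in (1 : ℝ)..2, P s) - ∑ i, v i * P (s i)| ≤ Real.exp y * Real.exp (-(3 * L)) := by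
      have e1 : (∫ s in (1 : ℝ)..2, P s) =
          ∑ k ∈ Finset.range n, (-y) ^ k / k.factorial * ∫ s in (1 : ℝ)..2, s ^ k := by
        simp only [P]
        rw [intervalIntegral.integral_finsetSum
          (fun k _ => Continuous.intervalIntegrable (by fun_prop) _ _)]
        refine Finset.sum_congr rfl fun k _ => ?_
        rw [← intervalIntegral.integral_const_mul]
        congr 1; ext s
        rw [show -(s * y) = (-y) * s by ring, mul_pow]; ring
      have e2 : ∑ i, v i * P (s i) =
          ∑ k ∈ Finset.range n, (-y) ^ k / k.factorial * ∑ i, v i * s i ^ k := by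
        simp only [P, Finset.mul_sum]
        rw [Finset.sum_comm]
        refine Finset.sum_congr rfl fun k _ => Finset.sum_congr rfl fun i _ => ?_
        rw [show -(s i * y) = (-y) * s i by ring, mul_pow]; ring
      rw [e1, e2, ← Finset.sum_sub_distrib]
      calc _ ≤ ∑ k ∈ Finset.range n, |(-y) ^ k / k.factorial * (∫ s in (1 : ℝ)..2, s ^ k)
              - (-y) ^ k / k.factorial * ∑ i, v i * s i ^ k| := Finset.abs_sum_le_sum_abs _ _
        _ ≤ ∑ k ∈ Finset.range n, y ^ k / k.factorial * Real.exp (-(3 * L)) := by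
          refine Finset.sum_le_sum fun k hk => ?_
          rw [← mul_sub, abs_mul, abs_div, abs_pow, abs_neg, abs_of_pos hy, Nat.abs_cast]
          exact mul_le_mul_of_nonneg_left (hm k (Finset.mem_range.1 hk)) (by positivity)
        _ ≤ _ := by
          rw [← Finset.sum_mul]
          exact mul_le_mul_of_nonneg_right (Real.sum_le_exp_of_nonneg hy.le n) (Real.exp_pos _).le
    have e4 : Real.exp y * Real.exp (-(3 * L)) ≤ Real.exp (-(2 * L)) := by
      rw [← Real.exp_add]; exact Real.exp_le_exp.2 (by linarith)
    have e5 : Real.exp (-(3 * L)) ≤ Real.exp (-(2 * L)) := Real.exp_le_exp.2 (by linarith)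
    have h4 : |∑ i, v i * Real.exp (-(s i * y)) - ∫ s in (1 : ℝ)..2, Real.exp (-(s * y))|
        ≤ 5 * Real.exp (-(2 * L)) := by
      rw [abs_le] at *
      constructor <;> linarith [h1.1, h1.2, h2.1, h2.2, h3.1, h3.2]
    rw [← hint, ← mul_sub, abs_mul, abs_of_pos hy]
    calc _ ≤ L * (5 * Real.exp (-(2 * L))) := by gcongr
      _ ≤ Real.exp L * (5 * Real.exp (-(2 * L))) := by
        gcongr; linarith [Real.add_one_le_exp L]
      _ = 5 * Real.exp (-L) := by
        rw [mul_left_comm, ← Real.exp_add]; ring_nf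
      _ ≤ _ := by gcongr; linarith
  · have h0 : 0 ≤ ∑ i, v i * Real.exp (-(s i * y)) :=
      Finset.sum_nonneg fun i _ => mul_nonneg (hv i).le (Real.exp_pos _).le
    have h1 : ∑ i, v i * Real.exp (-(s i * y)) ≤ Real.exp (-y) := by
      calc _ ≤ ∑ i, v i * Real.exp (-y) := by
            refine Finset.sum_le_sum fun i _ => mul_le_mul_of_nonneg_left ?_ (hv i).le
            exact Real.exp_le_exp.2 (by nlinarith [(hs i).1])
        _ = _ := by rw [← Finset.sum_mul, hv1, one_mul]
    have h2 : y * ∑ i, v i * Real.exp (-(s i * y)) ≤ 2 * Real.exp (-(y / 2)) := by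
      calc _ ≤ (2 * Real.exp (y / 2)) * Real.exp (-y) := by
            gcongr; linarith [Real.add_one_le_exp (y / 2)]
        _ = _ := by rw [mul_assoc, ← Real.exp_add]; ring_nf
    have h3 : Real.exp (-(y / 2)) ≤ Real.exp (-(L / 2)) := Real.exp_le_exp.2 (by linarith)
    have h4 : Real.exp (-y) ≤ Real.exp (-(y / 2)) := Real.exp_le_exp.2 (by linarith)
    have h5 : Real.exp (-(2 * y)) ≤ Real.exp (-y) := Real.exp_le_exp.2 (by linarith)
    have h6 := Real.exp_pos (-(2 * y))
    have h7 := mul_nonneg hy.le h0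
    rw [abs_le]
    constructor <;> linarith

/-- `1/x` can be multiplicatively `δ`-approximated on `[ε, 1]` by a sum of
`poly(log(1/(εδ)))` exponentials `Σ w_j e^{-t_j x}` with `t_j = poly(1/(εδ))`. -/
theorem inv_approx_by_sum_of_exponentials :
    ∃ C : ℝ, 0 < C ∧ ∀ ε δ : ℝ, ε ∈ Set.Ioc (0 : ℝ) 1 → δ ∈ Set.Ioc (0 : ℝ) 1 →
      ∃ (N : ℕ) (w t : Fin N → ℝ), 0 < N ∧
        (N : ℝ) ≤ C * (1 + Real.log (1 / (ε * δ))) ^ C ∧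
        (∀ j, 0 < w j) ∧
        (∀ j, 0 < t j ∧ t j ≤ (C / (ε * δ)) ^ C) ∧
        ∀ x ∈ Set.Icc ε 1,
          (1 - δ) * x⁻¹ ≤ ∑ j, w j * Real.exp (-(t j) * x) ∧
          ∑ j, w j * Real.exp (-(t j) * x) ≤ (1 + δ) * x⁻¹ := by
  refine ⟨10000, by norm_num, ?_⟩
  rintro ε δ ⟨hε, hε1⟩ ⟨hδ, hδ1⟩
  have hεδ : 0 < ε * δ := mul_pos hε hδ
  have hεδ1 : ε * δ ≤ 1 := by nlinarith
  set Λ : ℝ := 1 + Real.log (1 / (ε * δ)) with hΛ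
  have hlε : Real.log ε ≤ 0 := Real.log_nonpos hε.le hε1
  have hlδ : Real.log δ ≤ 0 := Real.log_nonpos hδ.le hδ1
  have hΛe : Λ = 1 - Real.log ε - Real.log δ := by
    rw [hΛ, one_div, Real.log_inv, Real.log_mul hε.ne' hδ.ne']; ring
  have hΛ1 : 1 ≤ Λ := by linarith
  -- number of scales
  have hlog2 := Real.log_two_gt_d9
  have hlog2' := Real.log_two_lt_d9
  obtain ⟨K, hK0, hK1, hK2, hK3⟩ : ∃ K : ℕ, 0 < K ∧ (16 / (ε * δ ^ 2)) ≤ 2 ^ K ∧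
      (2 : ℝ) ^ K ≤ 2 * (16 / (ε * δ ^ 2)) ∧ (K : ℝ) ≤ 8 * Λ := by
    set A : ℝ := 16 / (ε * δ ^ 2) with hA
    have hA16 : 16 ≤ A := by
      rw [hA, le_div_iff₀ (by positivity)]
      have : ε * δ ^ 2 ≤ 1 := by
        have : δ ^ 2 ≤ 1 := by nlinarith
        nlinarith
      linarith
    obtain ⟨k, hk1, hk2⟩ := exists_nat_pow_near (x := A) (y := 2) (by linarith) (by norm_num)
    refine ⟨k + 1, by omega, hk2.le, by rw [pow_succ]; linarith, ?_⟩
    have h1 := Real.log_le_log (by positivity) hk1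
    have h2 : Real.log A = 4 * Real.log 2 - Real.log ε - 2 * Real.log δ := by
      rw [hA, Real.log_div (by norm_num) (by positivity), Real.log_mul hε.ne' (by positivity),
        Real.log_pow, show (16 : ℝ) = 2 ^ 4 by norm_num, Real.log_pow]
      push_cast; ring
    rw [Real.log_pow, h2] at h1
    push_cast
    have : (k : ℝ) * 0.69 ≤ k * Real.log 2 := by gcongr; linarith
    linarith
  have hKr : (1 : ℝ) ≤ K := by exact_mod_cast hK0
  set L : ℝ := 2 * Real.log (10 * K / δ) with hLdef
  have harg : 10 ≤ 10 * K / δ := by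
    rw [le_div_iff₀ hδ]; linarith
  have hL : 0 < L := by
    have := Real.log_pos (show 1 < 10 * K / δ by linarith)
    linarith
  have hLle : L ≤ 60 * Λ := by
    have h1 : Real.log (10 * K / δ) = Real.log (10 * K) - Real.log δ :=
      Real.log_div (by positivity) hδ.ne'
    have h2 := Real.log_le_sub_one_of_pos (show (0:ℝ) < K by linarith)
    have h3 : Real.log (10 * (K:ℝ)) = Real.log 10 + Real.log K :=
      Real.log_mul (by norm_num) (by positivity)
    have h4 := Real.log_le_sub_one_of_pos (show (0:ℝ) < 10 by norm_num)
    linarith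
  have hexpL : 5 * Real.exp (-(L / 2)) = δ / (2 * K) := by
    rw [hLdef, show -(2 * Real.log (10 * K / δ) / 2) = -Real.log (10 * K / δ) by ring,
      Real.exp_neg, Real.exp_log (by linarith)]
    field_simp; norm_num
  obtain ⟨m, s, v, hm, hv, hv1, hs, hmom⟩ := tchak ⌈9 * L⌉₊ (Real.exp (-(3 * L))) (Real.exp_pos _)
  have hpiece := piece L ⌈9 * L⌉₊ m hL (Nat.le_ceil _) s v hv hv1 hs hmom
  rw [hexpL] at hpiece
  have hm0 : 0 < m := by
    rcases Nat.eq_zero_or_pos m with rfl | h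
    · simp at hv1
    · exact h
  have hmle : (m : ℝ) ≤ 542 * Λ := by
    have h1 : (m : ℝ) ≤ ⌈9 * L⌉₊ + 1 := by exact_mod_cast hm
    have h2 := Nat.ceil_lt_add_one (show 0 ≤ 9 * L by linarith)
    linarith
  let a : ℕ → ℝ := fun j => δ / 4 * 2 ^ j
  have ha : ∀ j, 0 < a j := fun j => by positivity
  let e := (finProdFinEquiv (m := K) (n := m)).symm
  refine ⟨K * m, fun j => a (e j).1 * v (e j).2, fun j => a (e j).1 * s (e j).2,
    Nat.mul_pos hK0 hm0, ?_, fun j => mul_pos (ha _) (hv _), fun j => ⟨?_, ?_⟩, ?_⟩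
  · push_cast
    calc (K : ℝ) * m ≤ (8 * Λ) * (542 * Λ) := by gcongr
      _ ≤ 10000 * Λ ^ (2 : ℝ) := by
        rw [Real.rpow_two]; nlinarith
      _ ≤ _ := by gcongr; norm_num
  · exact mul_pos (ha _) (by linarith [(hs (e j).2).1])
  · have h1 : a (e j).1 * s (e j).2 ≤ a (e j).1 * 2 := by
      have := (hs (e j).2).2
      have := ha (e j).1
      gcongr; 
    have h2 : a (e j).1 * 2 ≤ δ / 4 * 2 ^ K := by
      have : (2 : ℝ) ^ ((e j).1.val + 1) ≤ 2 ^ K :=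
        pow_le_pow_right₀ (by norm_num) (e j).1.isLt
      simp only [a]
      rw [pow_succ] at this
      rw [mul_assoc]
      gcongr
    have h3 : δ / 4 * 2 ^ K ≤ 10000 / (ε * δ) := by
      calc _ ≤ δ / 4 * (2 * (16 / (ε * δ ^ 2))) := by gcongr
        _ = 8 / (ε * δ) := by field_simp; norm_num
        _ ≤ _ := by gcongr; norm_num
    have h4 : 1 ≤ 10000 / (ε * δ) := by
      rw [le_div_iff₀ hεδ]; linarith
    calc _ ≤ 10000 / (ε * δ) := by linarith
      _ = (10000 / (ε * δ)) ^ (1 : ℝ) := (Real.rpow_one _).symm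
      _ ≤ _ := by gcongr; norm_num
  · rintro x ⟨hxε, hx1⟩
    have hx : 0 < x := hε.trans_le hxε
    have hsum : ∑ j, a (e j).1 * v (e j).2 * Real.exp (-(a (e j).1 * s (e j).2) * x)
        = x⁻¹ * ∑ j ∈ Finset.range K, (a j * x) * ∑ i, v i * Real.exp (-(s i * (a j * x))) := by
      rw [Equiv.sum_comp e (fun q : Fin K × Fin m =>
        a q.1 * v q.2 * Real.exp (-(a q.1 * s q.2) * x)), Fintype.sum_prod_type, Finset.sum_range,
        Finset.mul_sum]
      refine Finset.sum_congr rfl fun j _ => ?_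
      rw [Finset.mul_sum, Finset.mul_sum]
      refine Finset.sum_congr rfl fun i _ => ?_
      rw [show -(a j * s i) * x = -(s i * (a j * x)) by ring]
      field_simp
    have htel : ∑ j ∈ Finset.range K, (Real.exp (-(a j * x)) - Real.exp (-(2 * (a j * x))))
        = Real.exp (-(a 0 * x)) - Real.exp (-(a K * x)) := by
      rw [← Finset.sum_range_sub' (fun j => Real.exp (-(a j * x)))]
      refine Finset.sum_congr rfl fun j _ => ?_
      simp only [a]
      ring_nf
    have herr : |(∑ j ∈ Finset.range K, (a j * x) * ∑ i, v i * Real.exp (-(s i * (a j * x))))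
        - (Real.exp (-(a 0 * x)) - Real.exp (-(a K * x)))| ≤ δ / 2 := by
      rw [← htel, ← Finset.sum_sub_distrib]
      refine (Finset.abs_sum_le_sum_abs _ _).trans ?_
      calc _ ≤ ∑ j ∈ Finset.range K, δ / (2 * K) :=
            Finset.sum_le_sum fun j _ => hpiece (a j * x) (mul_pos (ha j) hx)
        _ = _ := by simp; field_simp
    have h0 : 1 - δ / 4 ≤ Real.exp (-(a 0 * x)) := by
      have := Real.add_one_le_exp (-(a 0 * x))
      have : a 0 * x ≤ δ / 4 := by simp only [a]; nlinarith
      linarith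
    have h0' : Real.exp (-(a 0 * x)) ≤ 1 := Real.exp_le_one_iff.2 (by nlinarith [ha 0])
    have hKx : 4 / δ ≤ a K * x := by
      calc 4 / δ = δ / 4 * (16 / (ε * δ ^ 2)) * ε := by field_simp; norm_num
        _ ≤ δ / 4 * 2 ^ K * x := by gcongr
    have h1 : Real.exp (-(a K * x)) ≤ δ / 4 := by
      rw [Real.exp_neg, ← inv_div]
      apply inv_anti₀ (by positivity)
      linarith [Real.add_one_le_exp (a K * x)]
    have h1' := Real.exp_pos (-(a K * x))
    rw [hsum, mul_comm x⁻¹]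
    rw [abs_le] at herr
    have hxi : 0 ≤ x⁻¹ := by positivity
    constructor
    · apply mul_le_mul_of_nonneg_right _ hxi
      linarith [herr.1]
    · apply mul_le_mul_of_nonneg_right _ hxi
      linarith [herr.2]
end
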